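/- There exist absolute constants a ≥ 1 and, for every c' > 0, a constant C = C(c') > 0 such that the following holds. Let G be a connected undirected unweighted graph on n ≥ 2 nodes, let 0 < ε ≤ 1, and for s ∈ V define the closeness centrality c(s) := (n−1) / Σ_{v ∈ V} dist(v,s). If k ≥ C · n^{2/3} · (log n)^a / ε² and v_1, …, v_k are independent, uniformly random nodes of V, then with probability at least 1 − n^{−c'}, for every node s ∈ V the estimate (n / (k(n−1))) · Σ_{i=1}^{k} dist(v_i, s) lies in the interval [ (1/(1+ε)) · (1/c(s)), (1+ε) · (1/c(s)) ]. -/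

import Mathlib

/-!
Fix a node `s` and write `d v` for the hop distance from `v` to `s`, `S = ∑ v, d v`, and
`D = max d`. Every value `0, 1, …, D` is attained by `d` along a shortest path, so
`D ^ 2 ≤ 2 * S` (`sq_le_two_mul_sum`); also `S ≥ n - 1 ≥ n / 2`. Multiplying the two gives
`√n * D ≤ 2 * S` (`exists_profile`): the mean of the rescaled variable `d / D ∈ [0, 1]` is at
least `1 / (2 √n)`.

A multiplicative Chernoff bound for `k` independent samples (`card_upper_tail`,
`card_lower_tail`, obtained by counting tuples, with `exp y ≤ 1 + y + y ^ 2` on `|y| ≤ 1`) then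
bounds the failure probability at `s` by `2 exp (-k p ε² / 16)` with `p = S / (n D)`. Since
`k p ε² ≥ C n ^ (2/3) log n / (2 √n) ≥ (C / 2) log n`, a union bound over the `n` nodes finishes
the proof with `a = 1` and `C = 32 (c' + 2)`.
-/


open scoped BigOperators Classical ENNReal

/-- `p` is a walk with `k` edges (hops) in the graph whose adjacency relation is `Adj`. -/
def IsWalk {V : Type*} (Adj : V → V → Prop) (k : ℕ) (p : Fin (k + 1) → V) : Prop :=
  ∀ i : Fin k, Adj (p i.castSucc) (p i.succ)

/-- The number of edges of the walk `p` with `k` edges (all edges have weight `1`). -/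
noncomputable def walkCost {V : Type*} (c : V → V → ℝ≥0∞) (k : ℕ) (p : Fin (k + 1) → V) :
    ℝ≥0∞ :=
  ∑ i : Fin k, c (p i.castSucc) (p i.succ)

/-- The shortest-path distance from `u` to `v` in the graph given by `Adj` with edge
weights `c` (it is `⊤` if there is no walk from `u` to `v`). -/
noncomputable def gdist {V : Type*} (Adj : V → V → Prop) (c : V → V → ℝ≥0∞) (u v : V) :
    ℝ≥0∞ :=
  ⨅ (k : ℕ) (p : {p : Fin (k + 1) → V //
      p 0 = u ∧ p (Fin.last k) = v ∧ IsWalk Adj k p}), walkCost c k p.1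

/-- The (unweighted) shortest-path distance as a real number. -/
noncomputable def dR {V : Type*} (Adj : V → V → Prop) (u v : V) : ℝ :=
  (gdist Adj (fun _ _ => (1 : ℝ≥0∞)) u v).toReal


section Distance

variable {V : Type} (Adj : V → V → Prop)

/-- There is a walk with exactly `k` edges from `u` to `v`. -/
def HasWalk (u v : V) (k : ℕ) : Prop :=
  ∃ p : Fin (k + 1) → V, p 0 = u ∧ p (Fin.last k) = v ∧ IsWalk Adj k p

lemma walkCost_one (k : ℕ) (p : Fin (k + 1) → V) :
    walkCost (fun _ _ => (1 : ℝ≥0∞)) k p = k := by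
  simp [walkCost]

lemma exists_hasWalk {u v : V} (h : gdist Adj (fun _ _ => (1 : ℝ≥0∞)) u v ≠ ⊤) :
    ∃ k, HasWalk Adj u v k := by
  by_contra! hk
  apply h
  unfold gdist
  simp only [iInf_eq_top]
  rintro k ⟨p, hp⟩
  exact absurd ⟨p, hp⟩ (hk k)

lemma dR_eq_find {u v : V} (h : ∃ k, HasWalk Adj u v k) : dR Adj u v = (Nat.find h : ℕ) := by
  have : gdist Adj (fun _ _ => (1 : ℝ≥0∞)) u v = ((Nat.find h : ℕ) : ℝ≥0∞) := by
    unfold gdist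
    apply le_antisymm
    · obtain ⟨p, hp⟩ := Nat.find_spec h
      refine (iInf₂_le (Nat.find h) ⟨p, hp⟩).trans ?_
      rw [walkCost_one]
    · refine le_iInf₂ ?_
      rintro k ⟨p, hp⟩
      rw [walkCost_one]
      exact_mod_cast Nat.find_min' h ⟨p, hp⟩
  rw [dR, this]
  simp

lemma HasWalk.zero (u : V) : HasWalk Adj u u 0 :=
  ⟨fun _ => u, rfl, rfl, fun i => i.elim0⟩

lemma HasWalk.eq_of_zero {u v : V} (h : HasWalk Adj u v 0) : u = v := by
  obtain ⟨p, h0, h1, -⟩ := h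
  rw [← h0, ← h1]
  rfl

lemma HasWalk.cons {u w v : V} {k : ℕ} (h : Adj u w) (hw : HasWalk Adj w v k) :
    HasWalk Adj u v (k + 1) := by
  obtain ⟨p, h0, h1, hp⟩ := hw
  refine ⟨Fin.cons u p, rfl, ?_, ?_⟩
  · rw [← Fin.succ_last, Fin.cons_succ, h1]
  · intro i
    refine Fin.cases ?_ (fun j => ?_) i
    · simpa [h0] using h
    · rw [← Fin.succ_castSucc, Fin.cons_succ, Fin.cons_succ]
      exact hp j

lemma HasWalk.uncons {u v : V} {k : ℕ} (h : HasWalk Adj u v (k + 1)) :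
    ∃ w, Adj u w ∧ HasWalk Adj w v k := by
  obtain ⟨p, h0, h1, hp⟩ := h
  refine ⟨p 1, ?_, fun i => p i.succ, rfl, ?_, ?_⟩
  · have := hp 0
    simpa [h0] using this
  · simpa using h1
  · intro i
    have := hp i.succ
    simpa using this

/-- If `d` attains `m` whenever it attains `m + 1`, it attains `0, 1, …, d v`, so its sum is at
least `0 + 1 + ⋯ + d v = d v * (d v + 1) / 2`. -/
lemma sq_le_two_mul_sum [Fintype V] (d : V → ℕ)
    (hd : ∀ m v, d v = m + 1 → ∃ w, d w = m) (v : V) :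
    d v ^ 2 ≤ 2 * ∑ w, d w := by
  have hit : ∀ j m, (∃ w, d w = m + j) → ∃ w, d w = m := by
    intro j
    induction j with
    | zero => exact fun m h => h
    | succ j ih =>
      rintro m ⟨w, hw⟩
      exact ih m (hd (m + j) w hw)
  have hsub : Finset.range (d v + 1) ⊆ Finset.univ.image d := by
    intro m hm
    rw [Finset.mem_range] at hm
    obtain ⟨w, hw⟩ := hit (d v - m) m ⟨v, by omega⟩
    exact Finset.mem_image.2 ⟨w, Finset.mem_univ _, hw⟩
  have h1 : ∑ m ∈ Finset.range (d v + 1), m ≤ ∑ w, d w := by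
    refine (Finset.sum_le_sum_of_subset hsub).trans ?_
    exact Finset.sum_image_le_of_nonneg (g := d) (f := fun m => m) (fun _ _ => Nat.zero_le _)
  have h2 := Finset.sum_range_id_mul_two (d v + 1)
  simp only [Nat.add_sub_cancel] at h2
  nlinarith

/-- Distances to `s` are bounded by some `D > 0` with `√n * D ≤ 2 * ∑ dist`. -/
lemma exists_profile [Fintype V]
    (hconn : ∀ u v : V, gdist Adj (fun _ _ => (1 : ℝ≥0∞)) u v ≠ ⊤)
    {n : ℕ} (hn : Fintype.card V = n) (hn2 : 2 ≤ n) (s : V) :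
    ∃ D : ℝ, 0 < D ∧ (∀ v, 0 ≤ dR Adj v s ∧ dR Adj v s ≤ D) ∧
      √(n : ℝ) * D ≤ 2 * ∑ v, dR Adj v s := by
  have hex : ∀ v, ∃ k, HasWalk Adj v s k := fun v => exists_hasWalk Adj (hconn v s)
  let d : V → ℕ := fun v => Nat.find (hex v)
  have hdR : ∀ v, dR Adj v s = (d v : ℝ) := fun v => dR_eq_find Adj (hex v)
  have hpos : ∀ v, v ≠ s → 1 ≤ d v := by
    intro v hv
    rw [Nat.one_le_iff_ne_zero]
    intro h0
    have := Nat.find_spec (hex v)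
    change HasWalk Adj v s (d v) at this
    rw [h0] at this
    exact hv this.eq_of_zero
  have hstep : ∀ m v, d v = m + 1 → ∃ w, d w = m := by
    intro m v hv
    have h := Nat.find_spec (hex v)
    change HasWalk Adj v s (d v) at h
    rw [hv] at h
    obtain ⟨w, hvw, hw⟩ := h.uncons
    have h1 : d w ≤ m := Nat.find_min' (hex w) hw
    have h2 : d v ≤ d w + 1 :=
      Nat.find_min' (hex v) (HasWalk.cons Adj hvw (Nat.find_spec (hex w)))
    exact ⟨w, by omega⟩
  obtain ⟨v₀, -, hv₀⟩ := Finset.exists_max_image Finset.univ d ⟨s, Finset.mem_univ s⟩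
  obtain ⟨u, hu⟩ : ∃ u, u ≠ s := by
    have : Nontrivial V := Fintype.one_lt_card_iff_nontrivial.1 (by omega)
    exact exists_ne s
  have hD : 1 ≤ d v₀ := (hpos u hu).trans (hv₀ u (Finset.mem_univ u))
  have hsq : d v₀ ^ 2 ≤ 2 * ∑ w, d w := sq_le_two_mul_sum d hstep v₀
  have hcard : n ≤ ∑ w, d w + 1 := by
    have h1 : ∑ w ∈ Finset.univ.erase s, 1 ≤ ∑ w ∈ Finset.univ.erase s, d w :=
      Finset.sum_le_sum fun w hw => hpos w (Finset.ne_of_mem_erase hw)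
    have h2 : ∑ w ∈ Finset.univ.erase s, d w ≤ ∑ w, d w :=
      Finset.sum_le_sum_of_subset (Finset.erase_subset _ _)
    rw [Finset.sum_const, Finset.card_erase_of_mem (Finset.mem_univ s), Finset.card_univ] at h1
    simp only [smul_eq_mul, mul_one] at h1
    omega
  have hsum : ∑ v, dR Adj v s = ((∑ w, d w : ℕ) : ℝ) := by
    push_cast
    exact Finset.sum_congr rfl fun v _ => hdR v
  refine ⟨d v₀, by exact_mod_cast hD, fun v => ?_, ?_⟩
  · rw [hdR]
    exact ⟨Nat.cast_nonneg _, by exact_mod_cast hv₀ v (Finset.mem_univ v)⟩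
  · rw [hsum]
    set S := ∑ w, d w
    have hS : n ≤ 2 * S := by omega
    have key : n * d v₀ ^ 2 ≤ (2 * S) ^ 2 := by
      rw [sq (2 * S)]
      exact Nat.mul_le_mul hS hsq
    have key' : (n : ℝ) * (d v₀ : ℝ) ^ 2 ≤ (2 * (S : ℝ)) ^ 2 := by exact_mod_cast key
    refine (sq_le_sq₀ (by positivity) (by positivity)).1 ?_
    rwa [mul_pow, Real.sq_sqrt (Nat.cast_nonneg n)]

end Distance

section Chernoff

variable {V : Type} [Fintype V]

/-- Moment generating function bound for a uniform sample of a `[0, 1]`-valued function with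
mean `p`. -/
lemma sum_exp_le (g : V → ℝ) (hg : ∀ v, 0 ≤ g v ∧ g v ≤ 1) {p : ℝ}
    (hp : ∑ v, g v = Fintype.card V * p) {l : ℝ} (hl : |l| ≤ 1) :
    ∑ v, Real.exp (l * g v) ≤ Fintype.card V * Real.exp ((l + l ^ 2) * p) := by
  have h1 : ∀ v, Real.exp (l * g v) ≤ 1 + (l + l ^ 2) * g v := by
    intro v
    obtain ⟨h0, h1⟩ := hg v
    have habs : |l * g v| ≤ 1 := by
      rw [abs_mul, abs_of_nonneg h0]
      exact mul_le_one₀ hl h0 h1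
    have h2 := (abs_le.1 (Real.abs_exp_sub_one_sub_id_le habs)).2
    have h3 : (l * g v) ^ 2 ≤ l ^ 2 * g v := by
      rw [mul_pow]
      exact mul_le_mul_of_nonneg_left (by nlinarith) (sq_nonneg l)
    linarith
  calc ∑ v, Real.exp (l * g v) ≤ ∑ v, (1 + (l + l ^ 2) * g v) :=
        Finset.sum_le_sum fun v _ => h1 v
    _ = Fintype.card V * ((l + l ^ 2) * p + 1) := by
        rw [Finset.sum_add_distrib, ← Finset.mul_sum, hp]
        simp
        ring
    _ ≤ _ := mul_le_mul_of_nonneg_left (Real.add_one_le_exp _) (Nat.cast_nonneg _)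

/-- Exponential Markov inequality for the sum of `k` independent samples. -/
lemma card_tail (g : V → ℝ) (hg : ∀ v, 0 ≤ g v ∧ g v ≤ 1) {p : ℝ}
    (hp : ∑ v, g v = Fintype.card V * p) {l : ℝ} (hl : |l| ≤ 1) (k : ℕ) (t : ℝ) :
    ((Finset.univ.filter (fun f : Fin k → V => t < l * ∑ i, g (f i))).card : ℝ) ≤
      Fintype.card (Fin k → V) * Real.exp (k * ((l + l ^ 2) * p) - t) := by
  have h1 : ((Finset.univ.filter (fun f : Fin k → V => t < l * ∑ i, g (f i))).card : ℝ)
      * Real.exp t ≤ ∑ f : Fin k → V, Real.exp (l * ∑ i, g (f i)) := by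
    rw [← nsmul_eq_mul, ← Finset.sum_const]
    refine (Finset.sum_le_sum fun f hf => ?_).trans
      (Finset.sum_le_sum_of_subset_of_nonneg (Finset.filter_subset _ _)
        fun _ _ _ => (Real.exp_pos _).le)
    exact Real.exp_le_exp.2 (Finset.mem_filter.1 hf).2.le
  have h2 : ∑ f : Fin k → V, Real.exp (l * ∑ i, g (f i)) = (∑ v, Real.exp (l * g v)) ^ k := by
    rw [Fintype.sum_pow]
    refine Finset.sum_congr rfl fun f _ => ?_
    rw [Finset.mul_sum, Real.exp_sum]
  have h3 : (∑ v, Real.exp (l * g v)) ^ k ≤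
      Fintype.card (Fin k → V) * Real.exp (k * ((l + l ^ 2) * p)) := by
    refine (pow_le_pow_left₀ (Finset.sum_nonneg fun _ _ => (Real.exp_pos _).le)
      (sum_exp_le g hg hp hl) k).trans ?_
    rw [mul_pow, ← Real.exp_nat_mul]
    simp
  rw [Real.exp_sub, mul_div_assoc', le_div_iff₀ (Real.exp_pos t)]
  exact h1.trans (h2.le.trans h3)

lemma card_upper_tail (g : V → ℝ) (hg : ∀ v, 0 ≤ g v ∧ g v ≤ 1) {p : ℝ} (hp0 : 0 ≤ p)
    (hp : ∑ v, g v = Fintype.card V * p) {ε : ℝ} (h0 : 0 < ε) (h1 : ε ≤ 1) (k : ℕ) :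
    ((Finset.univ.filter (fun f : Fin k → V =>
      (1 + ε) * (k * p) < ∑ i, g (f i))).card : ℝ) ≤
      Fintype.card (Fin k → V) * Real.exp (-(k * p * ε ^ 2 / 16)) := by
  have hl : |ε / 2| ≤ 1 := by
    rw [abs_of_pos (by positivity)]
    linarith
  refine le_trans ?_ ((card_tail g hg hp hl k (ε / 2 * ((1 + ε) * (k * p)))).trans ?_)
  · refine Nat.cast_le.2 (Finset.card_le_card fun f hf => ?_)
    rw [Finset.mem_filter] at hf ⊢
    exact ⟨hf.1, mul_lt_mul_of_pos_left hf.2 (by positivity)⟩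
  · refine mul_le_mul_of_nonneg_left (Real.exp_le_exp.2 ?_) (Nat.cast_nonneg _)
    have : 0 ≤ k * p * ε ^ 2 := by positivity
    nlinarith

lemma card_lower_tail (g : V → ℝ) (hg : ∀ v, 0 ≤ g v ∧ g v ≤ 1) {p : ℝ}
    (hp : ∑ v, g v = Fintype.card V * p) {ε : ℝ} (h0 : 0 < ε) (h1 : ε ≤ 1) (k : ℕ) :
    ((Finset.univ.filter (fun f : Fin k → V =>
      ∑ i, g (f i) < (1 - ε / 2) * (k * p))).card : ℝ) ≤
      Fintype.card (Fin k → V) * Real.exp (-(k * p * ε ^ 2 / 16)) := by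
  have hl : |-(ε / 4)| ≤ 1 := by
    rw [abs_neg, abs_of_pos (by positivity)]
    linarith
  refine le_trans ?_ ((card_tail g hg hp hl k (-(ε / 4) * ((1 - ε / 2) * (k * p)))).trans ?_)
  · refine Nat.cast_le.2 (Finset.card_le_card fun f hf => ?_)
    rw [Finset.mem_filter] at hf ⊢
    exact ⟨hf.1, mul_lt_mul_of_neg_left hf.2 (by linarith)⟩
  · refine mul_le_mul_of_nonneg_left (Real.exp_le_exp.2 (le_of_eq ?_)) (Nat.cast_nonneg _)
    ring

/-- Two-sided bound for `[0, D]`-valued functions, stated for the normalised estimator; the mean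
of `h / D` is `(∑ h) / (n D)`. -/
lemma card_bad_le (h : V → ℝ) {D : ℝ} (hD : 0 < D) (hh : ∀ v, 0 ≤ h v ∧ h v ≤ D)
    {n : ℕ} (hn : Fintype.card V = n) (hn2 : 2 ≤ n) {ε : ℝ} (h0 : 0 < ε) (h1 : ε ≤ 1)
    {k : ℕ} (hk : 0 < k) :
    ((Finset.univ.filter (fun f : Fin k → V => ¬
      ((1 / (1 + ε)) * (1 / (((n : ℝ) - 1) / ∑ v, h v)) ≤
          ((n : ℝ) / ((k : ℝ) * ((n : ℝ) - 1))) * ∑ i, h (f i) ∧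
        ((n : ℝ) / ((k : ℝ) * ((n : ℝ) - 1))) * ∑ i, h (f i) ≤
          (1 + ε) * (1 / (((n : ℝ) - 1) / ∑ v, h v))))).card : ℝ) ≤
      2 * (Fintype.card (Fin k → V) *
        Real.exp (-(k * ((∑ v, h v) / (n * D)) * ε ^ 2 / 16))) := by
  have hn0 : (0 : ℝ) < n := by exact_mod_cast (by omega : 0 < n)
  have hn1 : (0 : ℝ) < (n : ℝ) - 1 := by
    have : (2 : ℝ) ≤ n := by exact_mod_cast hn2
    linarith
  have hk0 : (0 : ℝ) < k := by exact_mod_cast hk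
  set S := ∑ v, h v with hS
  have hS0 : 0 ≤ S := Finset.sum_nonneg fun v _ => (hh v).1
  set p := S / (n * D) with hp
  have hp0 : 0 ≤ p := by positivity
  let g : V → ℝ := fun v => h v / D
  have hg : ∀ v, 0 ≤ g v ∧ g v ≤ 1 := fun v =>
    ⟨div_nonneg (hh v).1 hD.le, (div_le_one hD).2 (hh v).2⟩
  have hgp : ∑ v, g v = Fintype.card V * p := by
    simp only [g]
    rw [← Finset.sum_div, ← hS, hn, hp]
    field_simp
  have hU := card_upper_tail g hg hp0 hgp h0 h1 k
  have hL := card_lower_tail g hg hgp h0 h1 k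
  rw [two_mul]
  refine le_trans ?_ (add_le_add hU hL)
  rw [← Nat.cast_add]
  refine Nat.cast_le.2 (le_trans (Finset.card_le_card fun f hf => ?_) (Finset.card_union_le _ _))
  rw [Finset.mem_union, Finset.mem_filter, Finset.mem_filter]
  by_contra! hcon
  refine (Finset.mem_filter.1 hf).2 ?_
  have hu := hcon.1 (Finset.mem_univ f)
  have hl := hcon.2 (Finset.mem_univ f)
  have hsum : ∑ i, g (f i) = (∑ i, h (f i)) / D := by
    simp only [g]
    rw [Finset.sum_div]
  rw [hsum] at hu hl
  set T := ∑ i, h (f i)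
  -- `q` converts sums of `h / D` over the sample into the normalised estimator.
  set q : ℝ := n * D / (k * (n - 1)) with hq
  have hq0 : 0 ≤ q := by positivity
  have e1 : (n : ℝ) / (k * (n - 1)) * T = q * (T / D) := by
    rw [hq]
    field_simp
  have e2 : 1 / (((n : ℝ) - 1) / S) = q * (k * p) := by
    rw [hq, hp, one_div_div]
    field_simp
  rw [e1, e2]
  have hqp : 0 ≤ q * (k * p) := by positivity
  constructor
  · have h3 : 1 / (1 + ε) ≤ 1 - ε / 2 := by
      rw [div_le_iff₀ (by linarith)]
      nlinarith
    calc 1 / (1 + ε) * (q * (k * p)) ≤ (1 - ε / 2) * (q * (k * p)) :=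
          mul_le_mul_of_nonneg_right h3 hqp
      _ = q * ((1 - ε / 2) * (k * p)) := by ring
      _ ≤ _ := mul_le_mul_of_nonneg_left hl hq0
  · calc q * (T / D) ≤ q * ((1 + ε) * (k * p)) := mul_le_mul_of_nonneg_left hu hq0
      _ = _ := by ring

end Chernoff

/-- The numerical heart: with `C = 32 (c' + 2)` the union bound over `n` nodes is at most
`n ^ (-c')`. -/
lemma union_bound {n : ℕ} (hn2 : 2 ≤ n) {c' ε S D : ℝ} {k : ℕ} (hc : 0 < c') (h0 : 0 < ε)
    (hD : 0 < D) (hSD : √(n : ℝ) * D ≤ 2 * S)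
    (hk : 32 * (c' + 2) * (n : ℝ) ^ ((2 : ℝ) / 3) * (Real.log n) ^ (1 : ℝ) / ε ^ 2 ≤ (k : ℝ)) :
    n * (2 * Real.exp (-(k * (S / (n * D)) * ε ^ 2 / 16))) ≤ (n : ℝ) ^ (-c') := by
  have hn2' : (2 : ℝ) ≤ n := by exact_mod_cast hn2
  have hn0 : (0 : ℝ) < n := by linarith
  have hlog : 0 < Real.log n := Real.log_pos (by linarith)
  rw [Real.rpow_one, div_le_iff₀ (by positivity)] at hk
  have hsq : √(n : ℝ) ≤ (n : ℝ) ^ ((2 : ℝ) / 3) := by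
    rw [Real.sqrt_eq_rpow]
    exact Real.rpow_le_rpow_of_exponent_le (by linarith) (by norm_num)
  have hs0 : 0 < √(n : ℝ) := Real.sqrt_pos.2 hn0
  have hp : 1 ≤ 2 * √(n : ℝ) * (S / (n * D)) := by
    rw [mul_div_assoc', le_div_iff₀ (by positivity)]
    have := Real.mul_self_sqrt hn0.le
    nlinarith
  have hp0 : 0 < S / (n * D) := by
    by_contra! hneg
    nlinarith
  have hkey : (c' + 2) * Real.log n ≤ k * (S / (n * D)) * ε ^ 2 / 16 := by
    set p := S / (n * D)
    have hA : 0 < 16 * (c' + 2) * Real.log n := by positivity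
    have h1 : 16 * (c' + 2) * Real.log n ≤ 16 * (c' + 2) * Real.log n * (2 * √(n : ℝ) * p) :=
      le_mul_of_one_le_right hA.le hp
    have h2 : 32 * (c' + 2) * √(n : ℝ) * Real.log n ≤ k * ε ^ 2 := by
      refine le_trans ?_ hk
      gcongr
    have h3 := mul_le_mul_of_nonneg_right h2 hp0.le
    linarith
  have hexp : Real.exp (-(k * (S / (n * D)) * ε ^ 2 / 16)) ≤ (n : ℝ) ^ (-c' - 2) := by
    rw [Real.rpow_def_of_pos hn0]
    refine Real.exp_le_exp.2 ?_
    linarith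
  have hsplit : (n : ℝ) ^ (-c' - 2) = (n : ℝ) ^ (-c') / n ^ 2 := by
    rw [Real.rpow_sub hn0]
    norm_num
  rw [hsplit] at hexp
  have hr : 0 < (n : ℝ) ^ (-c') := Real.rpow_pos_of_pos hn0 _
  calc (n : ℝ) * (2 * Real.exp (-(k * (S / (n * D)) * ε ^ 2 / 16)))
      ≤ n * (2 * ((n : ℝ) ^ (-c') / n ^ 2)) := by gcongr
    _ = (n : ℝ) ^ (-c') * (2 / n) := by field_simp
    _ ≤ (n : ℝ) ^ (-c') := mul_le_of_le_one_right hr.le ((div_le_one hn0).2 hn2')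

/-- **Sampling approximates closeness centrality (Lemma G.2 / Theorem G.1).**
There are absolute constants `a ≥ 1` and, for every `c' > 0`, a constant `C > 0` such
that: for every connected undirected unweighted graph on `n ≥ 2` nodes, every
`0 < ε ≤ 1` and every `k ≥ C·n^{2/3}·(log n)^a / ε²`, for at least a `(1 - n^{-c'})`-fraction
of all tuples `(v₁, …, v_k)` of nodes (i.e. of independent uniform samples), every node `s`
satisfies `(n/(k(n-1)))·∑ᵢ dist(vᵢ,s) ∈ [(1/(1+ε))·(1/c(s)), (1+ε)·(1/c(s))]`, where
`c(s) = (n-1)/∑_v dist(v,s)` is the closeness centrality of `s`. -/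
theorem stmt_17 :
    ∃ a : ℝ, 1 ≤ a ∧ ∀ c' : ℝ, 0 < c' → ∃ C : ℝ, 0 < C ∧
      ∀ (V : Type) [Fintype V] [DecidableEq V] (Adj : V → V → Prop),
        (∀ u v : V, Adj u v → Adj v u) →
        (∀ u v : V, gdist Adj (fun _ _ => (1 : ℝ≥0∞)) u v ≠ ⊤) →
        ∀ n : ℕ, Fintype.card V = n → 2 ≤ n →
        ∀ ε : ℝ, 0 < ε → ε ≤ 1 →
        ∀ k : ℕ, C * (n : ℝ) ^ ((2 : ℝ) / 3) * (Real.log n) ^ a / ε ^ 2 ≤ (k : ℝ) →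
        (1 - (n : ℝ) ^ (-c')) * (Fintype.card (Fin k → V) : ℝ) ≤
          ((Finset.univ.filter (fun f : Fin k → V =>
            ∀ s : V,
              (1 / (1 + ε)) * (1 / (((n : ℝ) - 1) / ∑ v : V, dR Adj v s)) ≤
                ((n : ℝ) / ((k : ℝ) * ((n : ℝ) - 1))) * ∑ i : Fin k, dR Adj (f i) s ∧
              ((n : ℝ) / ((k : ℝ) * ((n : ℝ) - 1))) * ∑ i : Fin k, dR Adj (f i) s ≤
                (1 + ε) * (1 / (((n : ℝ) - 1) / ∑ v : V, dR Adj v s)))).card : ℝ) := by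
  refine ⟨1, le_rfl, fun c' hc => ⟨32 * (c' + 2), by linarith, ?_⟩⟩
  intro V _ _ Adj _ hconn n hn hn2 ε h0 h1 k hk
  have hn0 : (0 : ℝ) < n := by exact_mod_cast (by omega : 0 < n)
  have hk0 : 0 < k := by
    have hlog : 0 < Real.log n := Real.log_pos (by exact_mod_cast (by omega : 1 < n))
    have : (0 : ℝ) < k := lt_of_lt_of_le (by positivity) hk
    exact_mod_cast this
  set P : V → (Fin k → V) → Prop := fun s f =>
    (1 / (1 + ε)) * (1 / (((n : ℝ) - 1) / ∑ v : V, dR Adj v s)) ≤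
        ((n : ℝ) / ((k : ℝ) * ((n : ℝ) - 1))) * ∑ i : Fin k, dR Adj (f i) s ∧
      ((n : ℝ) / ((k : ℝ) * ((n : ℝ) - 1))) * ∑ i : Fin k, dR Adj (f i) s ≤
        (1 + ε) * (1 / (((n : ℝ) - 1) / ∑ v : V, dR Adj v s)) with hP
  have hbad : ∀ s, ((Finset.univ.filter (fun f => ¬ P s f)).card : ℝ) ≤
      Fintype.card (Fin k → V) * ((n : ℝ) ^ (-c') / n) := by
    intro s
    obtain ⟨D, hD, hd, hSD⟩ := exists_profile Adj hconn hn hn2 s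
    have hb := card_bad_le (fun v => dR Adj v s) hD hd hn hn2 h0 h1 hk0
    refine hb.trans ?_
    have hu := union_bound hn2 hc h0 hD hSD hk
    rw [mul_left_comm]
    refine mul_le_mul_of_nonneg_left ?_ (Nat.cast_nonneg _)
    rw [le_div_iff₀ hn0]
    linarith
  have hunion : ((Finset.univ.filter (fun f => ¬ ∀ s, P s f)).card : ℝ) ≤
      (n : ℝ) ^ (-c') * Fintype.card (Fin k → V) := by
    have hsub : Finset.univ.filter (fun f => ¬ ∀ s, P s f) ⊆
        Finset.univ.biUnion fun s => Finset.univ.filter (fun f => ¬ P s f) := by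
      intro f hf
      obtain ⟨s, hs⟩ := not_forall.1 (Finset.mem_filter.1 hf).2
      exact Finset.mem_biUnion.2
        ⟨s, Finset.mem_univ s, Finset.mem_filter.2 ⟨Finset.mem_univ f, hs⟩⟩
    calc ((Finset.univ.filter (fun f => ¬ ∀ s, P s f)).card : ℝ)
        ≤ ∑ s, ((Finset.univ.filter (fun f => ¬ P s f)).card : ℝ) := by
          exact_mod_cast (Finset.card_le_card hsub).trans Finset.card_biUnion_le
      _ ≤ ∑ _s : V, Fintype.card (Fin k → V) * ((n : ℝ) ^ (-c') / n) :=
          Finset.sum_le_sum fun s _ => hbad s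
      _ = _ := by
          rw [Finset.sum_const, Finset.card_univ, hn, nsmul_eq_mul]
          field_simp
  have hcompl := Finset.card_filter_add_card_filter_not
    (s := (Finset.univ : Finset (Fin k → V))) (fun f => ∀ s, P s f)
  rw [Finset.card_univ] at hcompl
  have hcompl' : ((Finset.univ.filter (fun f => ∀ s, P s f)).card : ℝ) +
      ((Finset.univ.filter (fun f => ¬ ∀ s, P s f)).card : ℝ) =
        Fintype.card (Fin k → V) := by
    exact_mod_cast hcompl
  have hfinal : (1 - (n : ℝ) ^ (-c')) * (Fintype.card (Fin k → V) : ℝ) ≤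
      ((Finset.univ.filter (fun f => ∀ s, P s f)).card : ℝ) := by
    linarith
  convert hfinal
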